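/- The partial derivative of the fourth component f̃₄ of the spatial path-following error model with respect to β̃₃, evaluated at (x̃, ũ) = (0, 0), equals v̄ · (tan β₃ᵣ / L₂) · (uᵣ L₂ + uᵣ M₁ cos β₂ᵣ − sin β₂ᵣ) / (cos β₃ᵣ · Eᵣ). -/

import Mathlib

/-!
The angle `β₃` enters the fourth component only through the factor `cos β₃` of the denominator `C₁`.
Since `C₁` has logarithmic derivative `-tan β₃` in `β₃`, differentiating its reciprocal multiplies
the joint-angle rate by `tan β₃`.
-/

open Real

namespace TwoTrailer

/-- The factor `C₁(β₂, β₃, u)`: the ratio of the signed speed of the rear trailer to that of the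
tractor. -/
noncomputable def speedRatio (M1 β2 β3 u : ℝ) : ℝ :=
  cos β3 * (cos β2 + M1 * u * sin β2)

/-- The rate of change of the joint angle `β₂` between tractor and dolly per unit of distance
travelled by the rear trailer; `u` is the curvature of the tractor's path. -/
noncomputable def jointRate (L2 M1 β2 β3 u : ℝ) : ℝ :=
  (u - sin β2 / L2 + (M1 / L2) * cos β2 * u) / speedRatio M1 β2 β3 u

variable {L2 M1 β2 β3 u : ℝ}

lemma hasDerivAt_speedRatio (hcos : cos β3 ≠ 0) :
    HasDerivAt (fun x ↦ speedRatio M1 β2 x u) (-tan β3 * speedRatio M1 β2 β3 u) β3 := by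
  refine ((hasDerivAt_cos β3).mul_const _).congr_deriv ?_
  rw [speedRatio, ← mul_assoc, neg_mul, neg_mul, tan_mul_cos hcos, neg_mul]

lemma hasDerivAt_jointRate (hC : speedRatio M1 β2 β3 u ≠ 0) :
    HasDerivAt (fun x ↦ jointRate L2 M1 β2 x u) (tan β3 * jointRate L2 M1 β2 β3 u) β3 := by
  have hcos : cos β3 ≠ 0 := left_ne_zero_of_mul hC
  refine ((hasDerivAt_const β3 _).fun_div (hasDerivAt_speedRatio hcos) hC).congr_deriv ?_
  rw [jointRate]
  field_simp
  ring

lemma jointRate_eq_div_mul_speedRatio (hL2 : L2 ≠ 0) :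
    jointRate L2 M1 β2 β3 u =
      (u * L2 + u * M1 * cos β2 - sin β2) / (L2 * speedRatio M1 β2 β3 u) := by
  rw [jointRate, ← div_div]
  congr 1
  field_simp
  ring

end TwoTrailer

open TwoTrailer

/-- To read this as `∂f̃₄/∂β̃₃` at an arbitrary state, take `s = (1 - κ z̃₃) / cos θ̃₃`, the nominal
joint rate for `c`, the nominal angle `β₃ᵣ` for `b`, and the values `β̃₂ + β₂ᵣ`, `ũ + uᵣ` for
`β2`, `u`. -/
theorem stmt_15_general {L2 M1 β2 β3 u b : ℝ} (hL2 : L2 ≠ 0)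
    (hC : speedRatio M1 β2 (β3 + b) u ≠ 0) (v s c : ℝ) :
    HasDerivAt (fun x ↦ v * (s * jointRate L2 M1 β2 (x + b) u - c))
      (v * s * (tan (β3 + b) / L2) *
        ((u * L2 + u * M1 * cos β2 - sin β2) / speedRatio M1 β2 (β3 + b) u)) β3 := by
  have hrate := (hasDerivAt_jointRate (L2 := L2) hC).comp_add_const β3 b
  refine (((hrate.const_mul s).sub_const c).const_mul v).congr_deriv ?_
  rw [jointRate_eq_div_mul_speedRatio hL2]
  ring

/-- ∂f̃₄/∂β̃₃ at the origin equals
v̄·(tan β₃ᵣ/L₂)·(uᵣ L₂ + uᵣ M₁ cos β₂ᵣ − sin β₂ᵣ)/(cos β₃ᵣ Eᵣ). -/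
theorem stmt_15
    (L2 L3 M1 vb b2r b3r ur : ℝ)
    (hL2 : 0 < L2) (hL3 : 0 < L3)
    (hvb : vb = 1 ∨ vb = -1)
    (C1 : ℝ → ℝ → ℝ → ℝ)
    (hC1 : ∀ β2 β3 u, C1 β2 β3 u = Real.cos β3 * (Real.cos β2 + M1 * u * Real.sin β2))
    (κ : ℝ) (hκ : κ = Real.tan b3r / L3)
    (Er : ℝ) (hEr : Er = Real.cos b2r + M1 * ur * Real.sin b2r)
    (hcos : Real.cos b3r ≠ 0) (hE : Er ≠ 0)
    (g : ℝ → ℝ)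
    -- f̃₄ as a function of β̃₃ alone, the other error variables being zero:
    (hg : ∀ β3, g β3 = vb * ( ((1 - κ * 0) / Real.cos 0) *
        ( ((0 + ur) - Real.sin (0 + b2r) / L2 +
            (M1 / L2) * Real.cos (0 + b2r) * (0 + ur)) /
          C1 (0 + b2r) (β3 + b3r) (0 + ur) )
      - ( (ur - Real.sin b2r / L2 + (M1 / L2) * Real.cos b2r * ur) /
          C1 b2r b3r ur ) )) :
    HasDerivAt g
      (vb * (Real.tan b3r / L2) *
        ((ur * L2 + ur * M1 * Real.cos b2r - Real.sin b2r) /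
          (Real.cos b3r * Er))) 0 := by
  have hg_rate : g = fun x ↦ vb * (1 * jointRate L2 M1 b2r (x + b3r) ur -
      jointRate L2 M1 b2r b3r ur) := by
    funext x
    simp only [hg, hC1, jointRate, speedRatio, zero_add, mul_zero, sub_zero, cos_zero, div_one]
  have hC : speedRatio M1 b2r (0 + b3r) ur ≠ 0 := by
    rw [zero_add]
    exact mul_ne_zero hcos (hEr ▸ hE)
  simpa only [hg_rate, hEr, speedRatio, zero_add, mul_one] using
    stmt_15_general hL2.ne' hC vb 1 (jointRate L2 M1 b2r b3r ur)
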